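/- Let d be a positive integer. If G is a finite d-degenerate graph and L is a list assignment with |L(v)| ≥ 2d + 2 for all vertices v of G, then for every pair of L-colorings α and β of G there exists a recoloring sequence from α to β that recolors each vertex at most d + 1 times; in particular, the distance between α and β in the reconfiguration graph of L-colorings is at most (d+1)|V(G)|. -/

import Mathlib

def IsLColoring {V : Type} (G : SimpleGraph V) (L : V → Finset ℕ) (φ : V → ℕ) : Prop :=
  (∀ v, φ v ∈ L v) ∧ ∀ ⦃u w : V⦄, G.Adj u w → φ u ≠ φ w

def recolorCount {V : Type} {m : ℕ} (φ : Fin (m + 1) → V → ℕ) (v : V) : ℕ :=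
  (Finset.univ.filter fun i : Fin m => φ i.castSucc v ≠ φ i.succ v).card

def IsRecolSeq {V : Type} (G : SimpleGraph V) (L : V → Finset ℕ) {m : ℕ}
    (φ : Fin (m + 1) → V → ℕ) (α β : V → ℕ) : Prop :=
  φ 0 = α ∧ φ (Fin.last m) = β ∧ (∀ i, IsLColoring G L (φ i)) ∧
    ∀ i : Fin m, ∃! v : V, φ i.castSucc v ≠ φ i.succ v

/-!
Add the vertices one at a time, each new vertex `v` having at most `d` neighbors among the earlier
ones `s`, and lift a recoloring of `s` to `insert v s`. Its moves are replayed unchanged; only when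
a neighbor is about to take the current color of `v` is `v` recolored first, to a color that differs
from the current colors of its neighbors (at most `d`) and from the next `k` colors which moves will
give to its neighbors. A list of more than `d + k` colors always provides one, and `v` is then safe
during `k` moves of its neighbors. If every neighbor moves at most `N + 1` times, `v` moves at most
`⌈d (N + 1) / k⌉` times, plus once at the end to reach its target color; this is at most `N + 1` as
soon as `d (N + 1) ≤ k N`. Lists of `2 d + 2` colors allow `k = d + 1` and `N = d`; lists of
`3 d + 1` colors allow `k = 2 d` and `N = 1`.
-/

variable {V κ : Type*}

/-- `φ` restricts to an `L`-coloring of the subgraph of `G` induced by `s`; its values outside `s`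
are arbitrary. -/
def IsListColoringOn (G : SimpleGraph V) (L : V → Finset κ) (s : Finset V) (φ : V → κ) : Prop :=
  (∀ u ∈ s, φ u ∈ L u) ∧ ∀ u ∈ s, ∀ w ∈ s, G.Adj u w → φ u ≠ φ w

/-- `RecolorsOn G L s φ ms ψ`: performing the moves `ms` in order, where `(v, c)` gives the vertex
`v` the new color `c`, is a recoloring sequence from `φ` to `ψ` on the subgraph induced by `s`.
The values of `φ` and `ψ` outside `s` do not matter. -/
inductive RecolorsOn [DecidableEq V] (G : SimpleGraph V) (L : V → Finset κ) (s : Finset V) :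
    (V → κ) → List (V × κ) → (V → κ) → Prop
  | nil {φ ψ : V → κ} (hφ : IsListColoringOn G L s φ) (h : Set.EqOn φ ψ s) :
      RecolorsOn G L s φ [] ψ
  | cons {φ ψ : V → κ} {v : V} {c : κ} {ms : List (V × κ)} (hφ : IsListColoringOn G L s φ)
      (hv : v ∈ s) (hc : φ v ≠ c) (h : RecolorsOn G L s (Function.update φ v c) ms ψ) :
      RecolorsOn G L s φ ((v, c) :: ms) ψ

/-- The colors which the moves `ms` give to neighbors of `v`, in order: those that may collide with
the color of `v` when `ms` is replayed. -/
def neighborColors (G : SimpleGraph V) [DecidableRel G.Adj] (v : V) (ms : List (V × κ)) : List κ :=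
  (ms.filter fun m => G.Adj v m.1).map Prod.snd

section ListColoring

variable {G : SimpleGraph V} {L : V → Finset κ} {s t : Finset V} {v : V} {φ ψ : V → κ}

theorem IsListColoringOn.mono (h : IsListColoringOn G L t φ) (hst : s ⊆ t) :
    IsListColoringOn G L s φ :=
  ⟨fun u hu => h.1 u (hst hu), fun u hu w hw => h.2 u (hst hu) w (hst hw)⟩

theorem IsListColoringOn.congr (h : IsListColoringOn G L s φ) (hφψ : Set.EqOn φ ψ s) :
    IsListColoringOn G L s ψ :=
  ⟨fun u hu => hφψ hu ▸ h.1 u hu, fun u hu w hw => hφψ hu ▸ hφψ hw ▸ h.2 u hu w hw⟩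

protected theorem IsListColoringOn.insert [DecidableEq V]
    (h : IsListColoringOn G L s φ) (hv : φ v ∈ L v)
    (hadj : ∀ u ∈ s, G.Adj v u → φ v ≠ φ u) : IsListColoringOn G L (insert v s) φ := by
  refine ⟨Finset.forall_mem_insert _ _ _ |>.2 ⟨hv, h.1⟩, fun u hu w hw huw => ?_⟩
  rcases Finset.mem_insert.1 hu with rfl | hus <;> rcases Finset.mem_insert.1 hw with rfl | hws
  · exact (huw.ne rfl).elim
  · exact hadj w hws huw
  · exact (hadj u hus huw.symm).symm
  · exact h.2 u hus w hws huw

theorem IsListColoringOn.exists_update_notMem [DecidableEq V] [DecidableRel G.Adj] {F : List κ}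
    (h : IsListColoringOn G L s φ) (hvs : v ∉ s)
    (hcard : (s.filter (G.Adj v)).card + F.length < (L v).card) :
    ∃ c, c ∉ F ∧ IsListColoringOn G L (insert v s) (Function.update φ v c) := by
  classical
  obtain ⟨c, hcL, hc⟩ : ∃ c ∈ L v, c ∉ (s.filter (G.Adj v)).image φ ∪ F.toFinset := by
    refine Finset.exists_mem_notMem_of_card_lt_card (lt_of_le_of_lt ?_ hcard)
    exact (Finset.card_union_le _ _).trans
      (add_le_add Finset.card_image_le (List.toFinset_card_le F))
  obtain ⟨hc_adj, hcF⟩ : (∀ u ∈ s, G.Adj v u → φ u ≠ c) ∧ c ∉ F := by simpa using hc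
  have hupdate : Set.EqOn φ (Function.update φ v c) s := fun u hu =>
    (Function.update_of_ne (ne_of_mem_of_not_mem hu hvs) _ _).symm
  refine ⟨c, hcF, (h.congr hupdate).insert (by simpa using hcL) fun u hu hvu => ?_⟩
  rw [Function.update_self, ← hupdate hu]
  exact (hc_adj u hu hvu).symm

theorem IsListColoringOn.insert_update [DecidableEq V] {x : V} {c : κ}
    (hψ : IsListColoringOn G L (insert v s) ψ) (hxv : x ≠ v)
    (hs : IsListColoringOn G L s (Function.update ψ x c)) (hc : G.Adj v x → ψ v ≠ c) :
    IsListColoringOn G L (insert v s) (Function.update ψ x c) := by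
  have hv := Finset.mem_insert_self v s
  have hψv : Function.update ψ x c v = ψ v := Function.update_of_ne hxv.symm _ _
  refine hs.insert (hψv ▸ hψ.1 v hv) fun u hu hvu => ?_
  rw [hψv]
  rcases eq_or_ne u x with rfl | hux
  · simpa using hc hvu
  · rw [Function.update_of_ne hux]
    exact hψ.2 v hv u (Finset.mem_insert_of_mem hu) hvu

end ListColoring

theorem exists_notMem_take_neighborColors {G : SimpleGraph V} [DecidableRel G.Adj] {v x : V}
    {a c : κ} {ms : List (V × κ)} {j : ℕ} (h : a ∉ (neighborColors G v ((x, c) :: ms)).take j) :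
    ∃ i, a ∉ (neighborColors G v ms).take i ∧
      (neighborColors G v ms).length - i ≤ (neighborColors G v ((x, c) :: ms)).length - j := by
  by_cases hvx : G.Adj v x
  · have hcons : neighborColors G v ((x, c) :: ms) = c :: neighborColors G v ms := by
      simp [neighborColors, hvx]
    rw [hcons] at h ⊢
    cases j with
    | zero => exact ⟨0, by simp, by simp⟩
    | succ j => exact ⟨j, fun ha => h (by simp [ha]), by simp⟩
  · have hcons : neighborColors G v ((x, c) :: ms) = neighborColors G v ms := by
      simp [neighborColors, hvx]
    exact ⟨j, hcons ▸ h, by rw [hcons]⟩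

section RecolorsOn

variable [DecidableEq V] {G : SimpleGraph V} {L : V → Finset κ} {s : Finset V} {v : V}
  {φ ψ : V → κ} {ms : List (V × κ)}

theorem RecolorsOn.isListColoringOn (h : RecolorsOn G L s φ ms ψ) : IsListColoringOn G L s φ := by
  cases h <;> assumption

theorem RecolorsOn.length_neighborColors [DecidableRel G.Adj] (h : RecolorsOn G L s φ ms ψ) :
    (neighborColors G v ms).length = ∑ u ∈ s.filter (G.Adj v), ms.countP (·.1 = u) := by
  induction h with
  | nil => simp [neighborColors]
  | @cons _ _ x _ _ _ hx _ _ ih =>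
    simp only [neighborColors, List.length_map] at ih
    by_cases hvx : G.Adj v x <;>
      simp [neighborColors, List.countP_cons, Finset.sum_add_distrib, hvx, hx, ih]

/-- Started from the coloring `ψ` of `insert v s`, the moves `ms` on `s` can be interleaved with
fewer than `b / k + 2` moves of `v` into a recoloring sequence to `β`. Here `b` counts the moves of
neighbors of `v` for which the current color of `v` is not known to be safe. -/
def HasLift (G : SimpleGraph V) (L : V → Finset κ) (s : Finset V) (v : V) (β : V → κ) (k : ℕ)
    (ψ : V → κ) (ms : List (V × κ)) (b : ℕ) : Prop :=
  ∃ ms', RecolorsOn G L (insert v s) ψ ms' β ∧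
    (∀ u ∈ s, ms'.countP (·.1 = u) = ms.countP (·.1 = u)) ∧ k * ms'.countP (·.1 = v) < b + 2 * k

theorem HasLift.nil {β : V → κ} {k : ℕ} (hk : 0 < k) (b : ℕ) (hvs : v ∉ s)
    (hψ : IsListColoringOn G L (insert v s) ψ) (hβ : IsListColoringOn G L (insert v s) β)
    (hψβ : Set.EqOn ψ β s) : HasLift G L s v β k ψ [] b := by
  by_cases hv : ψ v = β v
  · refine ⟨[], .nil hψ fun u hu => ?_, by simp, by simp [hk]⟩
    rcases Finset.mem_insert.1 hu with rfl | hus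
    exacts [hv, hψβ hus]
  · have hupdate : Set.EqOn (Function.update ψ v (β v)) β (insert v s : Finset V) := by
      intro u hu
      rcases eq_or_ne u v with rfl | huv
      · simp
      · rw [Function.update_of_ne huv, hψβ (Finset.mem_of_mem_insert_of_ne hu huv)]
    refine ⟨[(v, β v)], .cons hψ (Finset.mem_insert_self v s) hv
      (.nil (hβ.congr hupdate.symm) hupdate), fun u hu => ?_, ?_⟩
    · simpa using (ne_of_mem_of_not_mem hu hvs).symm
    · simp only [List.countP_singleton, decide_true, if_true]
      omega

theorem HasLift.mono {β : V → κ} {k a b : ℕ} (h : HasLift G L s v β k ψ ms a) (hab : a ≤ b) :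
    HasLift G L s v β k ψ ms b :=
  let ⟨ms', hms', hcount, hlt⟩ := h
  ⟨ms', hms', hcount, by omega⟩

theorem HasLift.cons {β : V → κ} {k b : ℕ} {x : V} {c : κ} (hvs : v ∉ s) (hx : x ∈ s)
    (hψ : IsListColoringOn G L (insert v s) ψ) (hc : ψ x ≠ c)
    (h : HasLift G L s v β k (Function.update ψ x c) ms b) :
    HasLift G L s v β k ψ ((x, c) :: ms) b := by
  obtain ⟨ms', hms', hcount, hlt⟩ := h
  refine ⟨(x, c) :: ms', .cons hψ (Finset.mem_insert_of_mem hx) hc hms', fun u hu => ?_, ?_⟩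
  · rw [List.countP_cons, List.countP_cons, hcount u hu]
  · simpa [ne_of_mem_of_not_mem hx hvs] using hlt

theorem HasLift.of_update {β : V → κ} {k b : ℕ} {c : κ} (hvs : v ∉ s) (hb : 0 < b)
    (hψ : IsListColoringOn G L (insert v s) ψ) (hc : ψ v ≠ c)
    (h : HasLift G L s v β k (Function.update ψ v c) ms (b - k)) :
    HasLift G L s v β k ψ ms b := by
  obtain ⟨ms', hms', hcount, hlt⟩ := h
  refine ⟨(v, c) :: ms', .cons hψ (Finset.mem_insert_self v s) hc hms', fun u hu => ?_, ?_⟩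
  · simpa [(ne_of_mem_of_not_mem hu hvs).symm] using hcount u hu
  · simp only [List.countP_cons, decide_true, if_true, mul_add, mul_one]
    rcases le_total k b with hkb | hbk
    · omega
    · have hle_one : ms'.countP (·.1 = v) ≤ 1 :=
        Nat.le_of_lt_succ (lt_of_mul_lt_mul_left (a := k) (by omega) k.zero_le)
      have := Nat.mul_le_mul_left k hle_one
      omega

theorem HasLift.of_forall_update [DecidableRel G.Adj] {β : V → κ} {k : ℕ} {F : List κ}
    (hvs : v ∉ s) (hcard : (s.filter (G.Adj v)).card + k < (L v).card)
    (hψ : IsListColoringOn G L (insert v s) ψ) (hF : ψ v ∈ F.take k)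
    (h : ∀ a ∉ F.take k, IsListColoringOn G L (insert v s) (Function.update ψ v a) →
      HasLift G L s v β k (Function.update ψ v a) ms (F.length - k)) :
    HasLift G L s v β k ψ ms F.length := by
  obtain ⟨a, ha, hψa⟩ :=
    (hψ.mono (Finset.subset_insert v s)).exists_update_notMem (F := F.take k) hvs
      (lt_of_le_of_lt (Nat.add_le_add_left (List.length_take_le _ _) _) hcard)
  exact .of_update hvs (List.length_pos_of_mem (List.mem_of_mem_take hF)) hψ
    (ne_of_mem_of_not_mem hF ha) (h a ha hψa)

theorem RecolorsOn.hasLift [DecidableRel G.Adj] {β : V → κ} {k : ℕ} (hk : 0 < k) (hvs : v ∉ s)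
    (hcard : (s.filter (G.Adj v)).card + k < (L v).card)
    (hβ : IsListColoringOn G L (insert v s) β) (h : RecolorsOn G L s φ ms β) (j : ℕ)
    (hφψ : Set.EqOn φ ψ s) (hψ : IsListColoringOn G L (insert v s) ψ)
    (hsafe : ψ v ∉ (neighborColors G v ms).take j) :
    HasLift G L s v β k ψ ms ((neighborColors G v ms).length - j) := by
  induction h generalizing ψ j with
  | nil _ hφβ => exact .nil hk _ hvs hψ hβ (hφψ.symm.trans hφβ)
  | @cons φ β x c ms _ hx hc hms ih =>
    have replay : ∀ (ψ : V → κ) (j : ℕ), Set.EqOn φ ψ s → IsListColoringOn G L (insert v s) ψ →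
        ψ v ∉ (neighborColors G v ((x, c) :: ms)).take j → (G.Adj v x → ψ v ≠ c) →
        HasLift G L s v β k ψ ((x, c) :: ms)
          ((neighborColors G v ((x, c) :: ms)).length - j) := by
      intro ψ j hφψ hψ hsafe hvc
      have hxv : x ≠ v := ne_of_mem_of_not_mem hx hvs
      have hupdate : Set.EqOn (Function.update φ x c) (Function.update ψ x c) s := by
        intro u hu
        simp only [Function.update_apply, hφψ hu]
      have hψ' := hψ.insert_update hxv (hms.isListColoringOn.congr hupdate) hvc
      obtain ⟨i, hi, hle⟩ := exists_notMem_take_neighborColors hsafe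
      refine .cons hvs hx hψ (hφψ hx ▸ hc) ((ih hβ i hupdate hψ' ?_).mono hle)
      rwa [Function.update_of_ne hxv.symm]
    by_cases hconflict : G.Adj v x ∧ ψ v = c
    · obtain ⟨hvx, rfl⟩ := hconflict
      have hcons : neighborColors G v ((x, ψ v) :: ms) = ψ v :: neighborColors G v ms := by
        simp [neighborColors, hvx]
      obtain rfl : j = 0 := by
        by_contra hj
        exact hsafe (by simp [hcons, List.take_cons (Nat.pos_of_ne_zero hj)])
      have hmem : ψ v ∈ (neighborColors G v ((x, ψ v) :: ms)).take k := by
        simp [hcons, List.take_cons hk]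
      refine .of_forall_update hvs hcard hψ hmem fun a ha hψa =>
        replay _ k (fun u hu => ?_) hψa (by simpa using ha) fun _ => ?_
      · rw [Function.update_of_ne (ne_of_mem_of_not_mem hu hvs), hφψ hu]
      · simpa using (ne_of_mem_of_not_mem hmem ha).symm
    · exact replay ψ j hφψ hψ hsafe fun hvx hvc => hconflict ⟨hvx, hvc⟩

theorem RecolorsOn.exists_insert [DecidableRel G.Adj] {α β : V → κ} {d k N : ℕ} (hk : 0 < k)
    (hN : d * (N + 1) ≤ k * N) (hvs : v ∉ s) (hdeg : (s.filter (G.Adj v)).card ≤ d)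
    (hL : d + k < (L v).card) (hα : IsListColoringOn G L (insert v s) α)
    (hβ : IsListColoringOn G L (insert v s) β) (h : RecolorsOn G L s α ms β)
    (hms : ∀ u ∈ s, ms.countP (·.1 = u) ≤ N + 1) :
    ∃ ms', RecolorsOn G L (insert v s) α ms' β ∧
      ∀ u ∈ insert v s, ms'.countP (·.1 = u) ≤ N + 1 := by
  obtain ⟨ms', hms', hcount, hlt⟩ := h.hasLift hk hvs (by omega) hβ 0
    (Set.eqOn_refl α s) hα (by simp)
  have hlength : (neighborColors G v ms).length ≤ k * N :=
    calc (neighborColors G v ms).length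
        = ∑ u ∈ s.filter (G.Adj v), ms.countP (·.1 = u) := h.length_neighborColors
      _ ≤ (s.filter (G.Adj v)).card * (N + 1) :=
        Finset.sum_le_card_nsmul _ _ _ fun u hu => hms u (Finset.mem_of_mem_filter u hu)
      _ ≤ d * (N + 1) := Nat.mul_le_mul_right _ hdeg
      _ ≤ k * N := hN
  refine ⟨ms', hms', Finset.forall_mem_insert _ _ _ |>.2 ⟨?_, fun u hu => hcount u hu ▸ hms u hu⟩⟩
  refine Nat.le_of_lt_succ (lt_of_mul_lt_mul_left (a := k) ?_ k.zero_le)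
  calc k * ms'.countP (·.1 = v) < (neighborColors G v ms).length + 2 * k := hlt
    _ ≤ k * N + 2 * k := Nat.add_le_add_right hlength _
    _ = k * (N + 1 + 1) := by ring

end RecolorsOn

@[elab_as_elim]
theorem degenerate_induction [DecidableEq V] {G : SimpleGraph V} [DecidableRel G.Adj] {d : ℕ}
    (hG : ∀ s : Finset V, s.Nonempty → ∃ v ∈ s, (s.filter (G.Adj v)).card ≤ d)
    {motive : Finset V → Prop} (empty : motive ∅)
    (insert : ∀ v s, v ∉ s → (s.filter (G.Adj v)).card ≤ d → motive s → motive (insert v s))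
    (s : Finset V) : motive s := by
  induction s using Finset.strongInduction with
  | H s ih =>
    rcases s.eq_empty_or_nonempty with rfl | hs
    · exact empty
    · obtain ⟨v, hv, hdeg⟩ := hG s hs
      rw [← Finset.insert_erase hv]
      refine insert v _ (Finset.notMem_erase v s) ?_ (ih _ (Finset.erase_ssubset hv))
      exact (Finset.card_le_card (Finset.filter_subset_filter _ (Finset.erase_subset v s))).trans
        hdeg

theorem exists_recolorsOn [DecidableEq V] {G : SimpleGraph V} [DecidableRel G.Adj]
    {L : V → Finset κ} {d k N : ℕ} (hk : 0 < k) (hN : d * (N + 1) ≤ k * N)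
    (hG : ∀ s : Finset V, s.Nonempty → ∃ v ∈ s, (s.filter (G.Adj v)).card ≤ d)
    (hL : ∀ v, d + k < (L v).card) {α β : V → κ} (s : Finset V)
    (hα : IsListColoringOn G L s α) (hβ : IsListColoringOn G L s β) :
    ∃ ms, RecolorsOn G L s α ms β ∧ ∀ u ∈ s, ms.countP (·.1 = u) ≤ N + 1 := by
  induction s using degenerate_induction hG with
  | empty => exact ⟨[], .nil hα (by simp), by simp⟩
  | insert v s hvs hdeg ih =>
    have hsub := Finset.subset_insert v s
    obtain ⟨ms, hms, hcount⟩ := ih (hα.mono hsub) (hβ.mono hsub)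
    exact hms.exists_insert hk hN hvs hdeg (hL v) hα hβ hcount

section RecoloringSequence

variable {V : Type} {G : SimpleGraph V} {L : V → Finset ℕ} {α β : V → ℕ} {m : ℕ}
  {φ : Fin (m + 1) → V → ℕ}

theorem isListColoringOn_univ [Fintype V] {φ : V → ℕ} :
    IsListColoringOn G L Finset.univ φ ↔ IsLColoring G L φ := by
  simp [IsListColoringOn, IsLColoring]

theorem recolorCount_cons (α : V → ℕ) (φ : Fin (m + 1) → V → ℕ) (v : V) :
    recolorCount (Fin.cons α φ : Fin (m + 2) → V → ℕ) v =
      recolorCount φ v + if α v ≠ φ 0 v then 1 else 0 := by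
  simp only [recolorCount, Finset.card_filter]
  rw [Fin.sum_univ_succ, add_comm]
  rfl

theorem IsRecolSeq.cons [DecidableEq V] {v : V} {c : ℕ} (hα : IsLColoring G L α) (hc : α v ≠ c)
    (h : IsRecolSeq G L φ (Function.update α v c) β) :
    IsRecolSeq G L (Fin.cons α φ : Fin (m + 2) → V → ℕ) α β := by
  obtain ⟨hfirst, hlast, hφ, hstep⟩ := h
  refine ⟨rfl, ?_, Fin.cases hα hφ, Fin.cases ⟨v, ?_, fun u hu => ?_⟩ hstep⟩
  · rw [← Fin.succ_last, Fin.cons_succ, hlast]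
  · simpa [hfirst] using hc
  · by_contra huv
    simp [hfirst, huv] at hu

theorem IsRecolSeq.sum_recolorCount [Fintype V] (h : IsRecolSeq G L φ α β) :
    ∑ v, recolorCount φ v = m := by
  classical
  have hone (i : Fin m) : (Finset.univ.filter fun v => φ i.castSucc v ≠ φ i.succ v).card = 1 :=
    Finset.card_eq_one_iff_existsUnique.2 (by simpa using h.2.2.2 i)
  calc ∑ v, recolorCount φ v
      = ∑ i : Fin m, (Finset.univ.filter fun v => φ i.castSucc v ≠ φ i.succ v).card :=
        Finset.sum_card_bipartiteAbove_eq_sum_card_bipartiteBelow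
          fun v (i : Fin m) => φ i.castSucc v ≠ φ i.succ v
    _ = m := by simp [hone]

theorem RecolorsOn.exists_isRecolSeq [Fintype V] [DecidableEq V] {ms : List (V × ℕ)}
    (h : RecolorsOn G L Finset.univ α ms β) :
    ∃ (m : ℕ) (φ : Fin (m + 1) → V → ℕ), IsRecolSeq G L φ α β ∧
      ∀ v, recolorCount φ v = ms.countP (·.1 = v) := by
  induction h with
  | @nil α β hα hαβ =>
    obtain rfl : α = β := by simpa using hαβ
    exact ⟨0, fun _ => α, ⟨rfl, rfl, fun _ => isListColoringOn_univ.1 hα, Fin.elim0⟩,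
      fun v => by simp [recolorCount]⟩
  | @cons α β x c ms hα _ hc _ ih =>
    obtain ⟨m, φ, hφ, hcount⟩ := ih
    refine ⟨m + 1, Fin.cons α φ, hφ.cons (isListColoringOn_univ.1 hα) hc, fun v => ?_⟩
    rw [recolorCount_cons, List.countP_cons, hcount, hφ.1]
    rcases eq_or_ne x v with rfl | hxv
    · simp [hc]
    · simp [hxv, hxv.symm]

end RecoloringSequence

theorem stmt_1_general {V : Type} [Fintype V] {G : SimpleGraph V} [DecidableRel G.Adj]
    {d k N : ℕ} (hk : 0 < k) (hN : d * (N + 1) ≤ k * N)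
    (hdegen : ∀ s : Finset V, s.Nonempty → ∃ v ∈ s, (s.filter (G.Adj v)).card ≤ d)
    {L : V → Finset ℕ} (hL : ∀ v, d + k < (L v).card)
    {α β : V → ℕ} (hα : IsLColoring G L α) (hβ : IsLColoring G L β) :
    ∃ (m : ℕ) (φ : Fin (m + 1) → V → ℕ),
      IsRecolSeq G L φ α β ∧ (∀ v : V, recolorCount φ v ≤ N + 1) ∧
      m ≤ (N + 1) * Fintype.card V := by
  classical
  obtain ⟨ms, hms, hms_count⟩ := exists_recolorsOn hk hN hdegen hL Finset.univ
    (isListColoringOn_univ.2 hα) (isListColoringOn_univ.2 hβ)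
  obtain ⟨m, φ, hφ, hφ_count⟩ := hms.exists_isRecolSeq
  have hcount (v : V) : recolorCount φ v ≤ N + 1 := hφ_count v ▸ hms_count v (Finset.mem_univ v)
  refine ⟨m, φ, hφ, hcount, ?_⟩
  calc m = ∑ v, recolorCount φ v := hφ.sum_recolorCount.symm
    _ ≤ Fintype.card V * (N + 1) := Finset.sum_le_card_nsmul _ _ _ fun v _ => hcount v
    _ = (N + 1) * Fintype.card V := mul_comm _ _

/-- if `G` is `d`-degenerate (every nonempty subgraph has a vertex of
degree at most `d`) and `|L(v)| ≥ 2d + 2` for all `v`, then any `L`-coloring `α`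
can be recolored to any `L`-coloring `β` recoloring each vertex at most `d + 1`
times; in particular the sequence has length at most `(d + 1)|V(G)|`. -/
theorem stmt_1 {V : Type} [Fintype V] [DecidableEq V]
    (G : SimpleGraph V) [DecidableRel G.Adj]
    (d : ℕ) (hd : 0 < d)
    (hdegen : ∀ s : Finset V, s.Nonempty → ∃ v ∈ s, (s.filter (G.Adj v)).card ≤ d)
    (L : V → Finset ℕ) (hL : ∀ v, 2 * d + 2 ≤ (L v).card)
    (α β : V → ℕ) (hα : IsLColoring G L α) (hβ : IsLColoring G L β) :
    ∃ (m : ℕ) (φ : Fin (m + 1) → V → ℕ),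
      IsRecolSeq G L φ α β ∧ (∀ v : V, recolorCount φ v ≤ d + 1) ∧
      m ≤ (d + 1) * Fintype.card V := by
  exact stmt_1_general d.succ_pos (mul_comm d (d + 1)).le hdegen (fun v => by have := hL v; omega)
    hα hβ
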